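/- Let k be a field, and let 0 → L →^f M →^g N → 0 be a short exact sequence of k-vector spaces (f injective, g surjective, ker(g) = im(f)). Let d_L : L → L, d_M : M → M, d_N : N → N be k-linear maps with d_L ∘ d_L = 0, d_M ∘ d_M = 0, d_N ∘ d_N = 0, and f ∘ d_L = d_M ∘ f, g ∘ d_M = d_N ∘ g. Write H(L) = ker(d_L)/im(d_L), H(M) = ker(d_M)/im(d_M), H(N) = ker(d_N)/im(d_N), and let f̄ : H(L) → H(M) and ḡ : H(M) → H(N) be the maps induced by f and g. Then there exist a k-vector space E and k-linear maps α : E → H(L) and β : H(N) → E such that the sequence 0 → E →^α H(L) →^{f̄} H(M) →^{ḡ} H(N) →^β E → 0 is exact (α injective, im(α) = ker(f̄), im(f̄) = ker(ḡ), im(ḡ) = ker(β), β surjective). -/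

import Mathlib

/-!
STATEMENT 4 (Hinich's lemma, ungraded form): given a short exact sequence
`0 → L → M → N → 0` of `k`-vector spaces compatible with square-zero
endomorphisms `d_L, d_M, d_N`, there are a vector space `E` and linear maps
`α : E → H(L)`, `β : H(N) → E` making
`0 → E → H(L) → H(M) → H(N) → E → 0` exact.
-/

/-- The homology `ker d / im d` of a linear endomorphism `d` with `d ∘ d = 0`,
realized as the quotient of `ker d` by the pullback of `im d`. -/
abbrev homologyOf {k V : Type*} [Field k] [AddCommGroup V] [Module k V]
    (d : V →ₗ[k] V) : Type _ :=
  LinearMap.ker d ⧸ (LinearMap.range d).comap (LinearMap.ker d).subtype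

/-- The map induced on homology by a linear map `f` commuting with the
differentials (`d_W ∘ f = f ∘ d_V`). -/
def inducedHomologyMap {k V W : Type*} [Field k]
    [AddCommGroup V] [Module k V] [AddCommGroup W] [Module k W]
    (dV : V →ₗ[k] V) (dW : W →ₗ[k] W) (f : V →ₗ[k] W)
    (hcomm : dW ∘ₗ f = f ∘ₗ dV) :
    homologyOf dV →ₗ[k] homologyOf dW :=
  Submodule.mapQ _ _
    (f.restrict (p := LinearMap.ker dV) (q := LinearMap.ker dW)
      (fun x hx => by
        simp only [LinearMap.mem_ker] at hx ⊢
        have h := LinearMap.congr_fun hcomm x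
        simp only [LinearMap.comp_apply] at h
        rw [h, hx, map_zero]))
    (by
      rintro ⟨x, hxk⟩ hx
      simp only [Submodule.mem_comap, Submodule.coe_subtype] at hx ⊢
      obtain ⟨y, hy⟩ := hx
      refine ⟨f y, ?_⟩
      have h := LinearMap.congr_fun hcomm y
      simp only [LinearMap.comp_apply] at h
      rw [h, hy]
      rfl)

universe u v w x

theorem homologyOf_mk_eq_zero {k V : Type*} [Field k] [AddCommGroup V] [Module k V]
    (d : V →ₗ[k] V) (a : LinearMap.ker d) :
    (Submodule.Quotient.mk a : homologyOf d) = 0 ↔ ∃ y, d y = a.1 := by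
  rw [Submodule.Quotient.mk_eq_zero]
  rfl

theorem homologyOf_mk_eq {k V : Type*} [Field k] [AddCommGroup V] [Module k V]
    (d : V →ₗ[k] V) (a b : LinearMap.ker d) :
    (Submodule.Quotient.mk a : homologyOf d) = Submodule.Quotient.mk b ↔
      ∃ y, d y = a.1 - b.1 := by
  rw [Submodule.Quotient.eq]
  rfl

theorem inducedHomologyMap_mk {k V W : Type*} [Field k]
    [AddCommGroup V] [Module k V] [AddCommGroup W] [Module k W]
    (dV : V →ₗ[k] V) (dW : W →ₗ[k] W) (f : V →ₗ[k] W)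
    (hcomm : dW ∘ₗ f = f ∘ₗ dV) (a : LinearMap.ker dV) (h : f a.1 ∈ LinearMap.ker dW) :
    inducedHomologyMap dV dW f hcomm (Submodule.Quotient.mk a) =
      Submodule.Quotient.mk ⟨f a.1, h⟩ := rfl

theorem hinich_six_term_exact
    {k : Type u} {L : Type v} {M : Type w} {N : Type x} [Field k]
    [AddCommGroup L] [Module k L] [AddCommGroup M] [Module k M]
    [AddCommGroup N] [Module k N]
    (f : L →ₗ[k] M) (g : M →ₗ[k] N)
    (hf : Function.Injective f) (hg : Function.Surjective g)
    (hfg : LinearMap.ker g = LinearMap.range f)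
    (dL : L →ₗ[k] L) (dM : M →ₗ[k] M) (dN : N →ₗ[k] N)
    (hdL : dL ∘ₗ dL = 0) (hdM : dM ∘ₗ dM = 0) (hdN : dN ∘ₗ dN = 0)
    (hfd : dM ∘ₗ f = f ∘ₗ dL) (hgd : dN ∘ₗ g = g ∘ₗ dM) :
    ∃ (E : Type v) (_ : AddCommGroup E) (_ : Module k E)
      (α : E →ₗ[k] homologyOf dL) (β : homologyOf dN →ₗ[k] E),
      Function.Injective α ∧
      LinearMap.range α = LinearMap.ker (inducedHomologyMap dL dM f hfd) ∧
      LinearMap.range (inducedHomologyMap dL dM f hfd) =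
        LinearMap.ker (inducedHomologyMap dM dN g hgd) ∧
      LinearMap.range (inducedHomologyMap dM dN g hgd) = LinearMap.ker β ∧
      Function.Surjective β := by
  have cf : ∀ l, dM (f l) = f (dL l) := fun l => LinearMap.congr_fun hfd l
  have cg : ∀ m, dN (g m) = g (dM m) := fun m => LinearMap.congr_fun hgd m
  have sL : ∀ l, dL (dL l) = 0 := fun l => LinearMap.congr_fun hdL l
  have sM : ∀ l, dM (dM l) = 0 := fun l => LinearMap.congr_fun hdM l
  have ex : ∀ m, g m = 0 → ∃ l, f l = m := fun m hm => by
    have : m ∈ LinearMap.range f := hfg ▸ (LinearMap.mem_ker.2 hm)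
    exact this
  have gf : ∀ l, g (f l) = 0 := fun l => by
    have : f l ∈ LinearMap.ker g := hfg ▸ LinearMap.mem_range_self f l
    exact this
  obtain ⟨s, hs⟩ := g.exists_rightInverse_of_surjective (LinearMap.range_eq_top.2 hg)
  obtain ⟨r, hr⟩ := f.exists_leftInverse_of_injective (LinearMap.ker_eq_bot.2 hf)
  have gs : ∀ n, g (s n) = n := fun n => LinearMap.congr_fun hs n
  have rf : ∀ l, r (f l) = l := fun l => LinearMap.congr_fun hr l
  have key : ∀ n, dN n = 0 → f (r (dM (s n))) = dM (s n) := fun n hn => by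
    obtain ⟨l, hl⟩ := ex (dM (s n)) (by rw [← cg, gs, hn])
    rw [← hl, rf]
  have hker : ∀ n ∈ LinearMap.ker dN, (r ∘ₗ dM ∘ₗ s) n ∈ LinearMap.ker dL := fun n hn => by
    rw [LinearMap.mem_ker]
    apply hf
    rw [← cf, map_zero]
    change dM (f (r (dM (s n)))) = 0
    rw [key n hn, sM]
  let δ : homologyOf dN →ₗ[k] homologyOf dL :=
    Submodule.mapQ _ _ ((r ∘ₗ dM ∘ₗ s).restrict hker) (by
      rintro ⟨n, hn⟩ ⟨n', hn'⟩
      change dN n' = n at hn'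
      obtain ⟨l, hl⟩ := ex (s n - dM (s n')) (by rw [map_sub, gs, ← cg, gs, hn', sub_self])
      refine ⟨l, ?_⟩
      change dL l = r (dM (s n))
      have : dM (s n) = f (dL l) := by rw [← cf, hl, map_sub, sM, sub_zero]
      rw [this, rf])
  have hδ : ∀ n : LinearMap.ker dN, δ (Submodule.Quotient.mk n) =
      Submodule.Quotient.mk ⟨r (dM (s n.1)), hker n.1 n.2⟩ := fun n => rfl
  have kf : ∀ l : LinearMap.ker dL, f l.1 ∈ LinearMap.ker dM := fun l => by
    rw [LinearMap.mem_ker, cf, LinearMap.mem_ker.1 l.2, map_zero]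
  have kg : ∀ m : LinearMap.ker dM, g m.1 ∈ LinearMap.ker dN := fun m => by
    rw [LinearMap.mem_ker, cg, LinearMap.mem_ker.1 m.2, map_zero]
  refine ⟨LinearMap.range δ, inferInstance, inferInstance, (LinearMap.range δ).subtype,
    δ.rangeRestrict, Subtype.val_injective, ?_, ?_, ?_, δ.surjective_rangeRestrict⟩
  · rw [Submodule.range_subtype]
    ext q
    obtain ⟨l, rfl⟩ := Submodule.Quotient.mk_surjective _ q
    rw [LinearMap.mem_ker, inducedHomologyMap_mk _ _ _ _ _ (kf l), homologyOf_mk_eq_zero]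
    constructor
    · rintro ⟨p, hp⟩
      obtain ⟨n, rfl⟩ := Submodule.Quotient.mk_surjective _ p
      rw [hδ, homologyOf_mk_eq] at hp
      obtain ⟨y, hy⟩ := hp
      refine ⟨s n.1 - f y, ?_⟩
      change dL y = r (dM (s n.1)) - l.1 at hy
      change dM (s n.1 - f y) = f l.1
      rw [map_sub, cf, hy, map_sub, key n.1 n.2, sub_sub_cancel]
    · rintro ⟨m, hm⟩
      change dM m = f l.1 at hm
      have hn : g m ∈ LinearMap.ker dN := by rw [LinearMap.mem_ker, cg, hm, gf]
      refine ⟨Submodule.Quotient.mk ⟨g m, hn⟩, ?_⟩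
      rw [hδ, homologyOf_mk_eq]
      obtain ⟨y, hy⟩ := ex (s (g m) - m) (by rw [map_sub, gs, sub_self])
      refine ⟨y, hf ?_⟩
      change f (dL y) = f (r (dM (s (g m))) - l.1)
      rw [← cf, hy, map_sub, map_sub, key _ hn, hm]
  · ext q
    obtain ⟨m, rfl⟩ := Submodule.Quotient.mk_surjective _ q
    rw [LinearMap.mem_ker, inducedHomologyMap_mk _ _ _ _ _ (kg m), homologyOf_mk_eq_zero]
    constructor
    · rintro ⟨p, hp⟩
      obtain ⟨l, rfl⟩ := Submodule.Quotient.mk_surjective _ p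
      rw [inducedHomologyMap_mk _ _ _ _ _ (kf l), homologyOf_mk_eq] at hp
      obtain ⟨y, hy⟩ := hp
      refine ⟨- g y, ?_⟩
      change dM y = f l.1 - m.1 at hy
      change dN (- g y) = g m.1
      rw [map_neg, cg, hy, map_sub, gf, zero_sub, neg_neg]
    · rintro ⟨n, hn⟩
      change dN n = g m.1 at hn
      obtain ⟨l, hl⟩ := ex (m.1 - dM (s n)) (by rw [map_sub, ← cg, gs, hn, sub_self])
      have hlk : l ∈ LinearMap.ker dL := by
        rw [LinearMap.mem_ker]
        apply hf
        rw [← cf, hl, map_sub, sM, LinearMap.mem_ker.1 m.2, sub_zero, map_zero]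
      refine ⟨Submodule.Quotient.mk ⟨l, hlk⟩, ?_⟩
      rw [inducedHomologyMap_mk _ _ _ _ _ (kf ⟨l, hlk⟩), homologyOf_mk_eq]
      refine ⟨- s n, ?_⟩
      change dM (- s n) = f l - m.1
      rw [hl, map_neg]
      abel
  · rw [LinearMap.ker_rangeRestrict]
    ext q
    obtain ⟨n, rfl⟩ := Submodule.Quotient.mk_surjective _ q
    rw [LinearMap.mem_ker, hδ, homologyOf_mk_eq_zero]
    constructor
    · rintro ⟨p, hp⟩
      obtain ⟨m, rfl⟩ := Submodule.Quotient.mk_surjective _ p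
      rw [inducedHomologyMap_mk _ _ _ _ _ (kg m), homologyOf_mk_eq] at hp
      obtain ⟨y, hy⟩ := hp
      change dN y = g m.1 - n.1 at hy
      obtain ⟨l, hl⟩ := ex (s n.1 - m.1 + dM (s y)) (by
        rw [map_add, map_sub, gs, ← cg, gs, hy]; abel)
      refine ⟨l, hf ?_⟩
      change f (dL l) = f (r (dM (s n.1)))
      rw [key n.1 n.2, ← cf, hl, map_add, map_sub, sM, LinearMap.mem_ker.1 m.2, sub_zero,
        add_zero]
    · rintro ⟨l, hl⟩
      change dL l = r (dM (s n.1)) at hl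
      have hm : s n.1 - f l ∈ LinearMap.ker dM := by
        rw [LinearMap.mem_ker, map_sub, cf, hl, key n.1 n.2, sub_self]
      refine ⟨Submodule.Quotient.mk ⟨s n.1 - f l, hm⟩, ?_⟩
      rw [inducedHomologyMap_mk _ _ _ _ _ (kg ⟨_, hm⟩), homologyOf_mk_eq]
      refine ⟨0, ?_⟩
      change dN 0 = g (s n.1 - f l) - n.1
      rw [map_sub, gs, gf, map_zero, sub_zero, sub_self]
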